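/- For every integer n ≥ 2 and all natural numbers j, k, one has gcd(s_j(n), s_k(n)) = s_m(n), where m is the natural number determined by 2m + 1 = gcd(2j + 1, 2k + 1). -/

import Mathlib

/-!
With `n = q² + q⁻²`, the sequence `s_k = (q^(2k+1) - q^(-(2k+1))) / (q - q⁻¹)` extends to all
`k : ℤ` and satisfies `s_{k+2j+1} = s_k + (q^(2(k+j+1)) + q^(-2(k+j+1))) s_j`. Hence, modulo any
ideal containing `s_j`, it has period `2j + 1`. The periods form a group, so modulo an ideal
containing `s_j` and `s_k` it has period `2m + 1 = gcd(2j + 1, 2k + 1)`, and `s_m ≡ s_j ≡ 0` because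
`j - m` is a multiple of `2m + 1`. Conversely, modulo `s_m` it has period `2m + 1`, so
`s_j ≡ s_k ≡ s_m ≡ 0`.
-/

/-- The sequence `s_k(n)`: `s_0 = 1`, `s_1 = n + 1`, `s_{k+2} = n·s_{k+1} − s_k`. -/
def s (n : ℤ) : ℕ → ℤ
  | 0 => 1
  | 1 => n + 1
  | k + 2 => n * s n (k + 1) - s n k

/-- The sequence `r_k(n)`: `r_0 = 1`, `r_1 = n − 1`, `r_{k+2} = n·r_{k+1} − r_k`. -/
def r (n : ℤ) : ℕ → ℤ
  | 0 => 1
  | 1 => n - 1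
  | k + 2 => n * r n (k + 1) - r n k

/-- Dilated Chebyshev polynomials of the first kind: `T_0 = 2`, `T_1 = n`. -/
def T (n : ℤ) : ℕ → ℤ
  | 0 => 2
  | 1 => n
  | k + 2 => n * T n (k + 1) - T n k

/-- Dilated Chebyshev polynomials of the second kind: `U_0 = 1`, `U_1 = n`. -/
def U (n : ℤ) : ℕ → ℤ
  | 0 => 1
  | 1 => n
  | k + 2 => n * U n (k + 1) - U n k

theorem s_nonneg_and_le_succ {n : ℤ} (hn : 2 ≤ n) (k : ℕ) : 0 ≤ s n k ∧ s n k ≤ s n (k + 1) := by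
  induction k with
  | zero => simp only [s]; lia
  | succ k ih =>
    have hrec : s n (k + 2) = n * s n (k + 1) - s n k := rfl
    have hnonneg : 0 ≤ s n (k + 1) := ih.1.trans ih.2
    have hgrowth : 2 * s n (k + 1) ≤ n * s n (k + 1) := mul_le_mul_of_nonneg_right hn hnonneg
    exact ⟨hnonneg, by linarith⟩

theorem periodic_intGcd {β : Type*} {f : ℤ → β} {a b : ℤ} (ha : Function.Periodic f a)
    (hb : Function.Periodic f b) : Function.Periodic f (Int.gcd a b) := by
  rw [Int.gcd_eq_gcd_ab, mul_comm a, mul_comm b]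
  exact (ha.int_mul _).add_period (hb.int_mul _)

theorem natCast_intGcd_eq_of_span_pair_eq {a b c : ℤ} (hc : 0 ≤ c)
    (h : Ideal.span {a, b} = Ideal.span {c}) : (Int.gcd a b : ℤ) = c := by
  rw [← span_gcd, Ideal.span_singleton_eq_span_singleton] at h
  exact Int.eq_of_associated_of_nonneg h (Int.natCast_nonneg _) hc

section ChebyshevW

open Polynomial

variable (R : Type*) [CommRing R]

theorem chebyshevC_mul_chebyshevS (a k : ℤ) :
    Chebyshev.C R a * Chebyshev.S R k = Chebyshev.S R (k + a) + Chebyshev.S R (k - a) := by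
  induction a using Chebyshev.induct' with
  | zero => simp [two_mul]
  | one => rw [Chebyshev.C_one, Chebyshev.S_add_one]; ring
  | add_two a ih_succ ih =>
    have hC := Chebyshev.C_add_two R a
    have hS_add := Chebyshev.S_add_two R (k + a)
    have hS_sub := Chebyshev.S_sub_two R (k - a)
    linear_combination (norm := ring_nf)
      Chebyshev.S R k * hC - hS_add - hS_sub + (X : R[X]) * ih_succ - ih
  | neg a ih => rw [Chebyshev.C_neg, ih, sub_neg_eq_add, ← sub_eq_add_neg, add_comm]

/-- The rescaled Chebyshev polynomial of the fourth kind, given by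
`W_k(2 cos θ) = sin ((k + 1/2) θ) / sin (θ / 2)` and indexed by `ℤ` so that it is defined on both
sides of its centre of antisymmetry `k = -1/2`. It extends the sequence `s`: see
`s_eq_eval_chebyshevW`. -/
noncomputable def chebyshevW (k : ℤ) : R[X] :=
  Chebyshev.S R k + Chebyshev.S R (k - 1)

theorem chebyshevW_zero : chebyshevW R 0 = 1 := by
  simp [chebyshevW]

theorem chebyshevW_one : chebyshevW R 1 = X + 1 := by
  simp [chebyshevW]

theorem chebyshevW_add_two (k : ℤ) :
    chebyshevW R (k + 2) = X * chebyshevW R (k + 1) - chebyshevW R k := by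
  have hS := Chebyshev.S_add_two R k
  have hS_pred := Chebyshev.S_add_two R (k - 1)
  simp only [chebyshevW]
  linear_combination (norm := ring_nf) hS + hS_pred

theorem chebyshevW_neg_sub_one (k : ℤ) : chebyshevW R (-k - 1) = -chebyshevW R k := by
  rw [chebyshevW, chebyshevW, Chebyshev.S_neg_sub_one, sub_sub, one_add_one_eq_two,
    Chebyshev.S_neg_sub_two]
  ring

theorem chebyshevC_mul_chebyshevW (a k : ℤ) :
    Chebyshev.C R a * chebyshevW R k = chebyshevW R (k + a) + chebyshevW R (k - a) := by
  have hS := chebyshevC_mul_chebyshevS R a k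
  have hS_pred := chebyshevC_mul_chebyshevS R a (k - 1)
  simp only [chebyshevW]
  linear_combination (norm := ring_nf) hS + hS_pred

theorem chebyshevW_add_two_mul_add_one (k j : ℤ) :
    chebyshevW R (k + (2 * j + 1)) =
      chebyshevW R k + Chebyshev.C R (k + j + 1) * chebyshevW R j := by
  have h_mul := chebyshevC_mul_chebyshevW R (k + j + 1) j
  rw [show j + (k + j + 1) = k + (2 * j + 1) by ring, show j - (k + j + 1) = -k - 1 by ring,
    chebyshevW_neg_sub_one] at h_mul
  linear_combination -h_mul

variable {R}

theorem periodic_mk_chebyshevW {I : Ideal R[X]} {j : ℤ} (hj : chebyshevW R j ∈ I) :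
    Function.Periodic (fun k ↦ Ideal.Quotient.mk I (chebyshevW R k)) (2 * j + 1) := fun k ↦ by
  simp [chebyshevW_add_two_mul_add_one, Ideal.Quotient.eq_zero_iff_mem.mpr hj]

theorem chebyshevW_mem_iff_of_periodic {I : Ideal R[X]} {m j : ℤ}
    (hper : Function.Periodic (fun k ↦ Ideal.Quotient.mk I (chebyshevW R k)) (2 * m + 1))
    (hdvd : 2 * m + 1 ∣ 2 * j + 1) : chebyshevW R j ∈ I ↔ chebyshevW R m ∈ I := by
  obtain ⟨u, hu⟩ := hdvd
  obtain ⟨t, rfl⟩ : Odd u := (Int.odd_mul.mp (hu ▸ odd_two_mul_add_one j)).2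
  obtain rfl : j = m + t * (2 * m + 1) := by linarith
  rw [← Ideal.Quotient.eq_zero_iff_mem, ← Ideal.Quotient.eq_zero_iff_mem]
  exact (hper.int_mul t m).congr_left

theorem chebyshevW_dvd_chebyshevW {m j : ℤ} (hdvd : 2 * m + 1 ∣ 2 * j + 1) :
    chebyshevW R m ∣ chebyshevW R j := by
  have hm := Ideal.mem_span_singleton_self (chebyshevW R m)
  rw [← Ideal.mem_span_singleton]
  exact (chebyshevW_mem_iff_of_periodic (periodic_mk_chebyshevW hm) hdvd).mpr hm

theorem chebyshevW_mem_of_eq_gcd {I : Ideal R[X]} {j k m : ℤ}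
    (hm : 2 * m + 1 = Int.gcd (2 * j + 1) (2 * k + 1)) (hj : chebyshevW R j ∈ I)
    (hk : chebyshevW R k ∈ I) : chebyshevW R m ∈ I := by
  have hper := periodic_intGcd (periodic_mk_chebyshevW hj) (periodic_mk_chebyshevW hk)
  rw [← hm] at hper
  exact (chebyshevW_mem_iff_of_periodic hper (hm ▸ Int.gcd_dvd_left ..)).mp hj

theorem span_pair_chebyshevW {j k m : ℤ}
    (hm : 2 * m + 1 = Int.gcd (2 * j + 1) (2 * k + 1)) :
    Ideal.span {chebyshevW R j, chebyshevW R k} = Ideal.span {chebyshevW R m} := by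
  apply le_antisymm
  · simp only [Ideal.span_le, Set.pair_subset_iff, SetLike.mem_coe, Ideal.mem_span_singleton]
    exact ⟨chebyshevW_dvd_chebyshevW (hm ▸ Int.gcd_dvd_left ..),
      chebyshevW_dvd_chebyshevW (hm ▸ Int.gcd_dvd_right ..)⟩
  · rw [Ideal.span_singleton_le_iff_mem]
    exact chebyshevW_mem_of_eq_gcd hm (Ideal.mem_span_pair.mpr ⟨1, 0, by simp⟩)
      (Ideal.mem_span_pair.mpr ⟨0, 1, by simp⟩)

theorem s_eq_eval_chebyshevW (n : ℤ) (k : ℕ) : s n k = (chebyshevW ℤ k).eval n := by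
  induction k using Nat.twoStepInduction with
  | zero => simp [s, chebyshevW_zero]
  | one => simp [s, chebyshevW_one]
  | more k ih ih_succ =>
    push_cast at ih_succ ⊢
    simp [s, chebyshevW_add_two, ih, ih_succ]

theorem s_gcd_general (x : R) {j k m : ℤ}
    (hm : 2 * m + 1 = Int.gcd (2 * j + 1) (2 * k + 1)) :
    Ideal.span {(chebyshevW R j).eval x, (chebyshevW R k).eval x} =
      Ideal.span {(chebyshevW R m).eval x} := by
  simpa [Ideal.map_span, Set.image_pair] using
    congrArg (Ideal.map (evalRingHom x)) (span_pair_chebyshevW (R := R) hm)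

end ChebyshevW

theorem s_gcd (n : ℤ) (hn : 2 ≤ n) (j k m : ℕ)
    (hm : 2 * m + 1 = Nat.gcd (2 * j + 1) (2 * k + 1)) :
    (Int.gcd (s n j) (s n k) : ℤ) = s n m := by
  have h_span := s_gcd_general n (j := j) (k := k) (m := m) (mod_cast hm)
  simp only [← s_eq_eval_chebyshevW] at h_span
  exact natCast_intGcd_eq_of_span_pair_eq (s_nonneg_and_le_succ hn m).1 h_span
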